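/- The coefficients b_j of θ_∞(t) = AH(γt) satisfy ord(b_j) ≥ j/(p−1) for all j ≥ 0. -/

import Mathlib

/-!
The logarithm `L = ∑ j, X ^ p ^ j / p ^ j` of `AH` satisfies `p L = p X + L(X ^ p)`, hence
`AH ^ p = exp (p X) * AH(X ^ p)`, where `exp (p X) ≡ 1` modulo `p`. By Dwork's lemma, a power series
`f` with constant coefficient `1` and `f ^ p = g * f(X ^ p)` for some integral `g ≡ 1` modulo `p` is
itself integral: if `u` is integral and agrees with `f` up to degree `n - 1`, then `p` times the
degree `n` coefficient of `f - u` is that of `g * u(X ^ p) - u ^ p`, which is divisible by `p`.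
So `AH` has `p`-integral coefficients, and `b n`, which is `γ ^ n` times the degree `n` coefficient
of `AH`, has order at least `n • ord γ`.
-/

open PowerSeries

section ExpOf

variable {A : Type*} [CommRing A] [Algebra ℚ A] {f g : A⟦X⟧}

/-- The exponential `exp f` of a power series `f` with zero constant coefficient (for other `f`
the substitution is a junk value), the counterpart of `PowerSeries.logOf`. -/
noncomputable def expOf (f : A⟦X⟧) : A⟦X⟧ := (exp A).subst f

theorem dvd_expOf_sub_one (hf : constantCoeff f = 0) : f ∣ expOf f - 1 := by
  have hsubst : HasSubst f := .of_constantCoeff_zero' hf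
  have hX : X ∣ exp A - 1 := X_dvd_iff.2 (by simp)
  simpa only [map_sub, map_one, coe_substAlgHom, subst_X hsubst] using!
    map_dvd (substAlgHom hsubst) hX

theorem constantCoeff_expOf (hf : constantCoeff f = 0) : constantCoeff (expOf f) = 1 := by
  have h := map_dvd (constantCoeff (R := A)) (dvd_expOf_sub_one hf)
  rwa [hf, zero_dvd_iff, map_sub, map_one, sub_eq_zero] at h

theorem derivative_expOf (hf : constantCoeff f = 0) :
    d⁄dX A (expOf f) = expOf f * d⁄dX A f := by
  rw [expOf, derivative_subst (.of_constantCoeff_zero' hf), derivative_exp]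

theorem expOf_mul_expOf_neg (hf : constantCoeff f = 0) : expOf f * expOf (-f) = 1 := by
  have : IsAddTorsionFree A := .of_module_rat A
  have hf' : constantCoeff (-f) = 0 := by rw [map_neg, hf, neg_zero]
  refine derivative.ext ?_ (by simp [constantCoeff_expOf, hf])
  simp only [Derivation.leibniz, derivative_expOf hf, derivative_expOf hf', map_neg,
    Derivation.map_one_eq_zero, smul_eq_mul]
  ring

theorem expOf_add (hf : constantCoeff f = 0) (hg : constantCoeff g = 0) :
    expOf (f + g) = expOf f * expOf g := by
  have : IsAddTorsionFree A := .of_module_rat A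
  have hfg : constantCoeff (f + g) = 0 := by rw [map_add, hf, hg, add_zero]
  have hneg : constantCoeff (-(f + g)) = 0 := by rw [map_neg, hfg, neg_zero]
  have hone : expOf f * expOf g * expOf (-(f + g)) = 1 := by
    refine derivative.ext ?_ (by simp [constantCoeff_expOf, hf, hg])
    simp only [Derivation.leibniz, derivative_expOf hf, derivative_expOf hg, derivative_expOf hneg,
      map_neg, map_add, Derivation.map_one_eq_zero, smul_eq_mul]
    ring
  calc expOf (f + g) = expOf f * expOf g * (expOf (f + g) * expOf (-(f + g))) := by
        rw [mul_left_comm, hone, mul_one]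
    _ = expOf f * expOf g := by rw [expOf_mul_expOf_neg hfg, mul_one]

theorem expOf_zero : expOf (0 : A⟦X⟧) = 1 := by
  simpa [expOf] using (subst_zero_eq_C_constantCoeff (f := exp A) (τ := Unit) (S := A))

theorem expOf_sum {ι : Type*} (s : Finset ι) {f : ι → A⟦X⟧}
    (hf : ∀ i ∈ s, constantCoeff (f i) = 0) : expOf (∑ i ∈ s, f i) = ∏ i ∈ s, expOf (f i) := by
  classical
  induction s using Finset.induction_on with
  | empty => exact expOf_zero
  | insert i s hi ih =>
    obtain ⟨hfi, hfs⟩ := Finset.forall_mem_insert _ _ _ |>.1 hf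
    rw [Finset.sum_insert hi, Finset.prod_insert hi, expOf_add hfi, ih hfs]
    rw [map_sum, Finset.sum_eq_zero hfs]

theorem expOf_nsmul (hf : constantCoeff f = 0) (k : ℕ) : expOf (k • f) = expOf f ^ k := by
  simpa using expOf_sum (Finset.range k) (f := fun _ => f) fun _ _ => hf

theorem sub_dvd_expOf_sub_expOf (hf : constantCoeff f = 0) (hg : constantCoeff g = 0) :
    f - g ∣ expOf f - expOf g := by
  have hfg : constantCoeff (f - g) = 0 := by rw [map_sub, hf, hg, sub_zero]
  have hfactor : expOf f - expOf g = expOf g * (expOf (f - g) - 1) := by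
    rw [mul_sub, ← expOf_add hg hfg, add_sub_cancel, mul_one]
  exact hfactor ▸ (dvd_expOf_sub_one hfg).mul_left _

theorem map_expOf {B : Type*} [CommRing B] [Algebra ℚ B] (φ : A →+* B)
    (hf : constantCoeff f = 0) : map φ (expOf f) = expOf (map φ f) := by
  rw [expOf, expOf, ← map_exp φ]
  exact map_subst (.of_constantCoeff_zero' hf) _

theorem subst_expOf (hf : constantCoeff f = 0) (hg : HasSubst g) :
    (expOf f).subst g = expOf (f.subst g) :=
  subst_comp_subst_apply (.of_constantCoeff_zero' hf) hg _

theorem rescale_expOf (hf : constantCoeff f = 0) (a : A) :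
    rescale a (expOf f) = expOf (rescale a f) := by
  simp only [rescale_eq_subst]
  exact subst_expOf hf (.smul_X' a)

theorem expand_expOf (hf : constantCoeff f = 0) {d : ℕ} (hd : d ≠ 0) :
    expand d hd (expOf f) = expOf (expand d hd f) := by
  simp only [expand_apply]
  exact subst_expOf hf (.X_pow hd)

theorem expOf_monomial {d : ℕ} (hd : d ≠ 0) (c : A) :
    expOf (monomial d c) = expand d hd (rescale c (exp A)) := by
  have hmonomial : monomial d c = expand d hd (c • X) := by
    rw [map_smul, expand_X, X_pow_eq, ← map_smul, smul_eq_mul, mul_one]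
  rw [hmonomial, ← expand_expOf (by simp), rescale_eq_subst, expOf]

end ExpOf

theorem coeff_prod_expand {R ι : Type*} [CommRing R] (s : Finset ι) {d : ι → ℕ}
    (hd : ∀ i, d i ≠ 0) (G : ι → R⟦X⟧) (n : ℕ) :
    coeff n (∏ i ∈ s, expand (d i) (hd i) (G i)) =
      ∑ᶠ k ∈ {k : ι →₀ ℕ | k.support ⊆ s ∧ (k.sum fun i m => m * d i) = n},
        ∏ i ∈ s, coeff (k i) (G i) := by
  classical
  set S := {k : ι →₀ ℕ | k.support ⊆ s ∧ (k.sum fun i m => m * d i) = n}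
  let F : (ι →₀ ℕ) → R := fun l => ∏ i ∈ s, coeff (l i) (expand (d i) (hd i) (G i))
  have hF (k : ι →₀ ℕ) : F (d • k) = ∏ i ∈ s, coeff (k i) (G i) :=
    Finset.prod_congr rfl fun i _ => by rw [← coeff_expand_mul (d i) (hd i) (G i) (k i)]; simp
  have hinj : Function.Injective fun k : ι →₀ ℕ => d • k := fun k k' h =>
    Finsupp.ext fun i => Nat.eq_of_mul_eq_mul_left (hd i).pos (DFunLike.congr_fun h i)
  have hantidiag (k : ι →₀ ℕ) : d • k ∈ s.finsuppAntidiag n ↔ k ∈ S := by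
    have hsub : (d • k).support = k.support := by ext i; simp [hd i]
    rw [Finset.mem_finsuppAntidiag, hsub, and_comm]
    refine and_congr_right fun hk => ?_
    rw [Finsupp.sum_of_support_subset k hk _ (by simp)]
    simp [mul_comm]
  have hsupport (l : ι →₀ ℕ) (hl : l ∈ Function.support F) :
      l ∈ (s.finsuppAntidiag n : Set (ι →₀ ℕ)) ↔ l ∈ (fun k => d • k) '' S := by
    refine ⟨fun hmem => ?_, fun ⟨k, hk, hkl⟩ => hkl ▸ (hantidiag k).2 hk⟩
    have hdvd (i : ι) : d i ∣ l i := by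
      by_cases hi : i ∈ s
      · contrapose! hl
        exact Function.notMem_support.2
          (Finset.prod_eq_zero hi (coeff_expand_of_not_dvd (d i) (hd i) _ hl))
      · rw [Finsupp.notMem_support_iff.1 fun h => hi ((Finset.mem_finsuppAntidiag.1 hmem).2 h)]
        exact dvd_zero _
    let k : ι →₀ ℕ := Finsupp.onFinset l.support (fun i => l i / d i) fun i hi =>
      Finsupp.mem_support_iff.2 fun h => hi (by rw [h, Nat.zero_div])
    have hkl : d • k = l := Finsupp.ext fun i => Nat.mul_div_cancel' (hdvd i)
    exact ⟨k, (hantidiag k).1 (hkl ▸ hmem), hkl⟩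
  calc coeff n (∏ i ∈ s, expand (d i) (hd i) (G i))
      = ∑ᶠ l ∈ (s.finsuppAntidiag n : Set (ι →₀ ℕ)), F l := by
        rw [finsum_mem_coe_finset, coeff_prod]
    _ = ∑ᶠ l ∈ (fun k => d • k) '' S, F l := finsum_mem_inter_support_eq' _ _ _ hsupport
    _ = ∑ᶠ k ∈ S, F (d • k) := finsum_mem_image hinj.injOn
    _ = ∑ᶠ k ∈ S, ∏ i ∈ s, coeff (k i) (G i) := by simp only [hF]

section Lacunary

variable {A : Type*} [CommSemiring A] {d : ℕ → ℕ}

/-- The power series `∑ j, c j * X ^ d j`. When infinitely many `d j` coincide, the corresponding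
coefficient may be a junk value. -/
noncomputable def lacunary (d : ℕ → ℕ) (c : ℕ → A) : A⟦X⟧ :=
  mk fun n => ∑ᶠ j, if d j = n then c j else 0

theorem coeff_lacunary (hd : ∀ j, j < d j) (c : ℕ → A) {n m : ℕ} (hnm : n ≤ m) :
    coeff n (lacunary d c) = ∑ j ∈ Finset.range m, if d j = n then c j else 0 := by
  rw [lacunary, coeff_mk]
  refine finsum_eq_sum_of_support_subset _ fun j hj => ?_
  have hdj : d j = n := by by_contra h; exact hj (if_neg h)
  exact Finset.mem_coe.2 (Finset.mem_range.2 ((hd j).trans_le (hdj.trans_le hnm)))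

theorem constantCoeff_lacunary (hd : ∀ j, j < d j) (c : ℕ → A) :
    constantCoeff (lacunary d c) = 0 := by
  simpa using coeff_lacunary hd c (le_refl 0)

theorem map_lacunary {B : Type*} [CommSemiring B] (φ : A →+* B) (hd : ∀ j, j < d j) (c : ℕ → A) :
    map φ (lacunary d c) = lacunary d (φ ∘ c) := by
  ext n
  rw [coeff_map, coeff_lacunary hd c le_rfl, coeff_lacunary hd _ le_rfl, map_sum]
  simp only [apply_ite φ, map_zero, Function.comp_apply]

theorem rescale_lacunary (hd : ∀ j, j < d j) (a : A) (c : ℕ → A) :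
    rescale a (lacunary d c) = lacunary d fun j => a ^ d j * c j := by
  ext n
  rw [coeff_rescale, coeff_lacunary hd c le_rfl, coeff_lacunary hd _ le_rfl, Finset.mul_sum]
  refine Finset.sum_congr rfl fun j _ => ?_
  split_ifs with h
  · rw [h]
  · rw [mul_zero]

theorem X_pow_dvd_lacunary_sub_sum {R : Type*} [CommRing R] (hd : ∀ j, j < d j) (c : ℕ → R)
    (n : ℕ) :
    X ^ (n + 1) ∣ lacunary d c - ∑ j ∈ Finset.range n, monomial (d j) (c j) := by
  refine X_pow_dvd_iff.2 fun m hm => ?_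
  rw [map_sub, map_sum, coeff_lacunary hd c (Nat.lt_succ_iff.1 hm), sub_eq_zero]
  simp only [coeff_monomial, eq_comm]

theorem coeff_expOf_lacunary {K : Type*} [Field K] [CharZero K] (hd : ∀ j, j < d j) (c : ℕ → K)
    (n : ℕ) :
    coeff n (expOf (lacunary d c)) =
      ∑ᶠ k ∈ {k : ℕ →₀ ℕ | (k.sum fun j m => m * d j) = n},
        ∏ j ∈ k.support, c j ^ k j / ((k j).factorial : K) := by
  have hd0 (j : ℕ) : d j ≠ 0 := (j.zero_le.trans_lt (hd j)).ne'
  have hmonomial (j : ℕ) : constantCoeff (monomial (d j) (c j)) = 0 := by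
    rw [← coeff_zero_eq_constantCoeff_apply, coeff_monomial, if_neg (hd0 j).symm]
  have htrunc : coeff n (expOf (lacunary d c)) =
      coeff n (expOf (∑ j ∈ Finset.range n, monomial (d j) (c j))) := by
    rw [← sub_eq_zero, ← map_sub]
    refine X_pow_dvd_iff.1 ((X_pow_dvd_lacunary_sub_sum hd c n).trans
      (sub_dvd_expOf_sub_expOf (constantCoeff_lacunary hd c) ?_)) n n.lt_succ_self
    rw [map_sum, Finset.sum_eq_zero fun j _ => hmonomial j]
  have hsupport {k : ℕ →₀ ℕ} (hk : (k.sum fun j m => m * d j) = n) :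
      k.support ⊆ Finset.range n := fun j hj => by
    have hkj : k j * d j ≤ n :=
      hk ▸ Finset.single_le_sum (f := fun j => k j * d j) (fun _ _ => Nat.zero_le _) hj
    have hkj0 : 0 < k j := (Finsupp.mem_support_iff.1 hj).pos
    exact Finset.mem_range.2 ((hd j).trans_le ((Nat.le_mul_of_pos_left _ hkj0).trans hkj))
  rw [htrunc, expOf_sum _ fun j _ => hmonomial j]
  simp only [expOf_monomial (hd0 _)]
  rw [coeff_prod_expand]
  refine finsum_mem_congr (Set.ext fun k => and_iff_right_of_imp hsupport) fun k hk => ?_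
  rw [← Finset.prod_subset (hsupport hk) fun j _ hj => by simp [Finsupp.notMem_support_iff.1 hj]]
  exact Finset.prod_congr rfl fun j _ => by simp [div_eq_mul_inv]

end Lacunary

section Dwork

variable {p : ℕ} [Fact p.Prime] {R K : Type*} [CommRing R] [CommRing K]

theorem dvd_coeff_pow_sub_expand (φ : R →+* ZMod p) (hφ : RingHom.ker φ = Ideal.span {(p : R)})
    (f : R⟦X⟧) (n : ℕ) : (p : R) ∣ coeff n (f ^ p - expand p (NeZero.ne p) f) := by
  have hfrob := MvPowerSeries.map_frobenius_expand p (NeZero.ne p) (f := (map φ f : (ZMod p)⟦X⟧))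
  rw [ZMod.frobenius_zmod, MvPowerSeries.map_id] at hfrob
  have hmod : map φ (f ^ p - expand p (NeZero.ne p) f) = 0 := by
    rw [map_sub, map_pow, map_expand, sub_eq_zero]
    exact hfrob.symm
  rw [← Ideal.mem_span_singleton, ← hφ, RingHom.mem_ker, ← coeff_map, hmod, map_zero]

theorem coeff_pow_sub_pow {f u : K⟦X⟧} {n : ℕ} (hn : n ≠ 0) (h : X ^ n ∣ f - u) (k : ℕ) :
    coeff n (f ^ k - u ^ k) = k * constantCoeff u ^ (k - 1) * coeff n (f - u) := by
  obtain ⟨w, hw⟩ := h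
  obtain ⟨r, hr⟩ := Polynomial.powAddExpansion u (f - u) k
  have hexpand : f ^ k - u ^ k = X ^ n * ((k : K⟦X⟧) * u ^ (k - 1) * w + X ^ n * (r * w ^ 2)) := by
    rw [add_sub_cancel] at hr
    rw [hr, hw]
    ring
  rw [hexpand, hw, coeff_X_pow_mul', coeff_X_pow_mul', if_pos le_rfl, if_pos le_rfl, Nat.sub_self]
  simp [hn]

theorem X_pow_succ_dvd_expand_sub_expand {f u : K⟦X⟧} {n d : ℕ} (hn : n ≠ 0) (hd : 1 < d)
    (h : X ^ n ∣ f - u) :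
    X ^ (n + 1) ∣ expand d (Nat.ne_zero_of_lt hd) f - expand d (Nat.ne_zero_of_lt hd) u := by
  have hdvd := map_dvd (expand d (Nat.ne_zero_of_lt hd)) h
  rw [map_pow, expand_X, ← pow_mul, map_sub] at hdvd
  exact (pow_dvd_pow X (by nlinarith [Nat.pos_of_ne_zero hn])).trans hdvd

variable [Algebra R K]

theorem exists_algebraMap_eq_coeff_of_X_pow_dvd_sub (hp : IsLeftRegular (p : K))
    (φ : R →+* ZMod p) (hφ : RingHom.ker φ = Ideal.span {(p : R)})
    {f : K⟦X⟧} (hf : constantCoeff f = 1) {g : R⟦X⟧} (hg : ∀ n, (p : R) ∣ coeff n (g - 1))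
    (h : f ^ p = map (algebraMap R K) g * expand p (NeZero.ne p) f)
    {u : R⟦X⟧} {n : ℕ} (hn : n ≠ 0) (hu : X ^ n ∣ f - map (algebraMap R K) u) :
    ∃ r : R, algebraMap R K r = coeff n f := by
  set U : K⟦X⟧ := map (algebraMap R K) u
  have hU0 : constantCoeff U = 1 := by
    rw [← hf, eq_comm, ← sub_eq_zero, ← map_sub]
    exact X_dvd_iff.1 ((dvd_pow_self X hn).trans hu)
  have hpow : coeff n (f ^ p) - coeff n (U ^ p) = p * coeff n (f - U) := by
    rw [← map_sub, coeff_pow_sub_pow hn hu, hU0, one_pow, mul_one]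
  have hexpand : coeff n (f ^ p) = coeff n (map (algebraMap R K) g * expand p (NeZero.ne p) U) := by
    rw [h, ← sub_eq_zero, ← map_sub, ← mul_sub]
    exact X_pow_dvd_iff.1 ((X_pow_succ_dvd_expand_sub_expand hn (Fact.out : p.Prime).one_lt
      hu).mul_left _) n n.lt_succ_self
  obtain ⟨r, hr⟩ : (p : R) ∣ coeff n (g * expand p (NeZero.ne p) u - u ^ p) := by
    have hsplit : g * expand p (NeZero.ne p) u - u ^ p =
        (g - 1) * expand p (NeZero.ne p) u - (u ^ p - expand p (NeZero.ne p) u) := by ring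
    rw [hsplit, map_sub, coeff_mul]
    exact dvd_sub (Finset.dvd_sum fun i _ => (hg i.1).mul_right _)
      (dvd_coeff_pow_sub_expand φ hφ u n)
  have hsub : algebraMap R K r = coeff n (f - U) := hp <| calc
    (p : K) * algebraMap R K r
      = algebraMap R K (coeff n (g * expand p (NeZero.ne p) u - u ^ p)) := by
        rw [hr, map_mul, map_natCast]
    _ = coeff n (map (algebraMap R K) g * expand p (NeZero.ne p) U) - coeff n (U ^ p) := by
        rw [← coeff_map, map_sub, map_sub, map_mul, map_expand, map_pow]
    _ = p * coeff n (f - U) := by rw [← hexpand, hpow]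
  exact ⟨r + coeff n u, by rw [map_add, hsub, ← coeff_map, ← map_add, sub_add_cancel]⟩

theorem exists_map_eq_of_pow_eq_mul_expand (hp : IsLeftRegular (p : K))
    (φ : R →+* ZMod p) (hφ : RingHom.ker φ = Ideal.span {(p : R)})
    {f : K⟦X⟧} (hf : constantCoeff f = 1) {g : R⟦X⟧} (hg : ∀ n, (p : R) ∣ coeff n (g - 1))
    (h : f ^ p = map (algebraMap R K) g * expand p (NeZero.ne p) f) :
    ∃ F : R⟦X⟧, map (algebraMap R K) F = f := by
  suffices hcoeff : ∀ n, ∃ r : R, algebraMap R K r = coeff n f by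
    choose a ha using hcoeff
    exact ⟨mk a, ext fun n => by rw [coeff_map, coeff_mk, ha]⟩
  intro n
  induction n using Nat.strong_induction_on with
  | _ n ih =>
  rcases eq_or_ne n 0 with rfl | hn
  · exact ⟨1, by rw [map_one, coeff_zero_eq_constantCoeff_apply, hf]⟩
  choose! a ha using ih
  refine exists_algebraMap_eq_coeff_of_X_pow_dvd_sub hp φ hφ hf hg h (u := mk a) hn ?_
  exact X_pow_dvd_iff.2 fun i hi => by rw [map_sub, coeff_map, coeff_mk, ha i hi, sub_self]

end Dwork

section ArtinHasse

variable {K : Type*} [Field K]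

/-- The logarithm `∑ j, X ^ p ^ j / p ^ j` of the Artin–Hasse exponential. -/
noncomputable def artinHasseLog (p : ℕ) (K : Type*) [Field K] : K⟦X⟧ :=
  lacunary (fun j => p ^ j) fun j => ((p : K) ^ j)⁻¹

theorem constantCoeff_artinHasseLog {p : ℕ} (hp : 1 < p) :
    constantCoeff (artinHasseLog p K) = 0 :=
  constantCoeff_lacunary (fun _ => Nat.lt_pow_self hp) _

variable [CharZero K]

/-- The Artin–Hasse exponential `AH`. -/
noncomputable def artinHasse (p : ℕ) (K : Type*) [Field K] [CharZero K] : K⟦X⟧ :=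
  expOf (artinHasseLog p K)

theorem map_artinHasse {L : Type*} [Field L] [CharZero L] {p : ℕ} (hp : 1 < p) (φ : K →+* L) :
    map φ (artinHasse p K) = artinHasse p L := by
  have hlog : map φ (artinHasseLog p K) = artinHasseLog p L := by
    rw [artinHasseLog, map_lacunary _ fun _ => Nat.lt_pow_self hp]
    simp [artinHasseLog, Function.comp_def]
  rw [artinHasse, map_expOf _ (constantCoeff_artinHasseLog hp), hlog, artinHasse]

theorem coeff_rescale_artinHasse {p : ℕ} (hp : 1 < p) (a : K) (n : ℕ) :
    coeff n (rescale a (artinHasse p K)) =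
      ∑ᶠ k ∈ {k : ℕ →₀ ℕ | (k.sum fun j m => m * p ^ j) = n},
        ∏ j ∈ k.support, (a ^ p ^ j / (p : K) ^ j) ^ k j / ((k j).factorial : K) := by
  have hlt (j : ℕ) : j < p ^ j := Nat.lt_pow_self hp
  rw [artinHasse, rescale_expOf (constantCoeff_artinHasseLog hp), artinHasseLog,
    rescale_lacunary hlt]
  simp only [← div_eq_mul_inv]
  exact coeff_expOf_lacunary hlt _ n

theorem nsmul_artinHasseLog {p : ℕ} (hp : 1 < p) :
    p • artinHasseLog p K =
      monomial 1 (p : K) + expand p (Nat.ne_zero_of_lt hp) (artinHasseLog p K) := by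
  have hlt (j : ℕ) : j < p ^ j := Nat.lt_pow_self hp
  have hp0 : p ≠ 0 := Nat.ne_zero_of_lt hp
  ext n
  rw [artinHasseLog, map_nsmul, map_add, coeff_lacunary hlt _ n.le_succ, Finset.sum_range_succ',
    coeff_expand, coeff_monomial, nsmul_add, add_comm]
  congr 1
  · simp [eq_comm]
  · split_ifs with hdvd
    · rw [coeff_lacunary hlt _ (Nat.div_le_self n p), Finset.smul_sum]
      obtain ⟨m, rfl⟩ := hdvd
      refine Finset.sum_congr rfl fun j _ => ?_
      simp only [Nat.mul_div_cancel_left m hp0.pos, pow_succ', Nat.mul_right_inj hp0, smul_ite,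
        mul_inv]
      simp [hp0]
    · refine smul_eq_zero_of_right _ (Finset.sum_eq_zero fun j _ => if_neg ?_)
      rintro rfl
      exact hdvd (dvd_pow_self p j.succ_ne_zero)

theorem artinHasse_pow {p : ℕ} (hp : 1 < p) :
    artinHasse p K ^ p =
      rescale (p : K) (exp K) * expand p (Nat.ne_zero_of_lt hp) (artinHasse p K) := by
  have hlog : constantCoeff (artinHasseLog p K) = 0 := constantCoeff_artinHasseLog hp
  rw [artinHasse, ← expOf_nsmul hlog, nsmul_artinHasseLog hp, expOf_add, expOf_monomial one_ne_zero,
    expand_one_apply, expand_expOf hlog]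
  · rw [← coeff_zero_eq_constantCoeff_apply, coeff_monomial, if_neg zero_ne_one]
  · rw [constantCoeff_expand, hlog]

variable {p : ℕ} [Fact p.Prime]

theorem exists_coeff_rescale_exp_eq_mul {n : ℕ} (hn : n ≠ 0) :
    ∃ r : ℤ_[p], coeff n (rescale (p : ℚ_[p]) (exp ℚ_[p])) = p * r := by
  have hfactorial : ¬ p ^ n ∣ n.factorial := by
    rw [padicValNat_dvd_iff_le n.factorial_ne_zero, not_le]
    exact padicValNat_factorial_lt_of_ne_zero p hn
  have hpow_lt : ‖(p : ℚ_[p]) ^ n‖ < ‖(n.factorial : ℚ_[p])‖ := by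
    contrapose! hfactorial
    have hdvd := (Padic.norm_int_le_pow_iff_dvd (p := p) (n.factorial : ℤ) n).1
      (by simpa using hfactorial)
    exact_mod_cast hdvd
  have hnorm : ‖coeff n (rescale (p : ℚ_[p]) (exp ℚ_[p]))‖ < 1 := by
    rw [coeff_rescale, coeff_exp, map_div₀, map_one, map_natCast, mul_one_div, norm_div]
    exact (div_lt_one ((norm_nonneg _).trans_lt hpow_lt)).2 hpow_lt
  obtain ⟨r, hr⟩ := (PadicInt.norm_lt_one_iff_dvd ⟨_, hnorm.le⟩).1 hnorm
  exact ⟨r, by simpa using congrArg ((↑) : ℤ_[p] → ℚ_[p]) hr⟩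

theorem exists_map_eq_artinHasse :
    ∃ F : ℤ_[p]⟦X⟧, map (algebraMap ℤ_[p] ℚ_[p]) F = artinHasse p ℚ_[p] := by
  choose! r hr using fun n (hn : n ≠ 0) => exists_coeff_rescale_exp_eq_mul (p := p) hn
  let g : ℤ_[p]⟦X⟧ := 1 + mk fun n => if n = 0 then 0 else p * r n
  have hg : map (algebraMap ℤ_[p] ℚ_[p]) g = rescale (p : ℚ_[p]) (exp ℚ_[p]) := by
    ext n
    rcases eq_or_ne n 0 with rfl | hn
    · rw [coeff_map]; simp [g]
    · simp [g, coeff_one, hn, hr]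
  have hprime : p.Prime := Fact.out
  refine exists_map_eq_of_pow_eq_mul_expand (g := g) ?_ PadicInt.toZMod ?_ ?_ ?_ ?_
  · exact (IsRegular.of_ne_zero (Nat.cast_ne_zero.2 hprime.ne_zero)).left
  · rw [PadicInt.ker_toZMod, PadicInt.maximalIdeal_eq_span_p]
  · exact constantCoeff_expOf (constantCoeff_artinHasseLog hprime.one_lt)
  · intro n
    rw [add_sub_cancel_left, coeff_mk]
    split_ifs
    exacts [dvd_zero _, dvd_mul_right _ _]
  · rw [hg, artinHasse_pow hprime.one_lt]

theorem not_dvd_den_coeff_artinHasse (n : ℕ) : ¬ p ∣ (coeff n (artinHasse p ℚ)).den := by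
  have hprime : p.Prime := Fact.out
  obtain ⟨F, hF⟩ := exists_map_eq_artinHasse (p := p)
  have hcoeff : ((coeff n (artinHasse p ℚ) : ℚ) : ℚ_[p]) = coeff n F := by
    rw [← eq_ratCast (algebraMap ℚ ℚ_[p]), ← coeff_map, map_artinHasse hprime.one_lt, ← hF,
      coeff_map]
    rfl
  have hunit := PadicInt.isUnit_den (p := p) _ (hcoeff ▸ (coeff n F).2)
  rwa [PadicInt.isUnit_iff, PadicInt.norm_natCast_eq_one_iff, hprime.coprime_iff_not_dvd] at hunit

end ArtinHasse

section AddValuation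

variable {Γ₀ : Type*} [LinearOrderedAddCommMonoidWithTop Γ₀]

theorem addValuation_natCast_nonneg {R : Type*} [Ring R] (v : AddValuation R Γ₀) (n : ℕ) :
    0 ≤ v n := by
  induction n with
  | zero => simp
  | succ n ih => exact Nat.cast_succ (R := R) n ▸ v.map_le_add ih v.map_one.ge

theorem addValuation_intCast_nonneg {R : Type*} [Ring R] (v : AddValuation R Γ₀) (z : ℤ) :
    0 ≤ v z := by
  obtain ⟨n, rfl | rfl⟩ := z.eq_nat_or_neg
  · exact_mod_cast addValuation_natCast_nonneg v n
  · simpa using addValuation_natCast_nonneg v n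

theorem addValuation_ratCast_nonneg {K : Type*} [Field K] [CharZero K] (v : AddValuation K Γ₀)
    {q : ℚ} (hq : v q.den = 0) : 0 ≤ v q := by
  have hnum : v q = v q.num := by
    rw [← add_zero (v q), ← hq, ← v.map_mul]
    exact congrArg v (by exact_mod_cast q.mul_den_eq_num)
  exact hnum ▸ addValuation_intCast_nonneg v q.num

end AddValuation

theorem theta_infty_coeff_bound_general {p : ℕ} (hp : p.Prime) {K : Type*} [Field K] [CharZero K]
    {Γ₀ : Type*} [LinearOrderedAddCommMonoidWithTop Γ₀] (v : AddValuation K Γ₀)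
    (hv : ∀ m : ℕ, ¬ p ∣ m → v m = 0) (γ : K) (b : ℕ → K)
    (hb : ∀ N : ℕ, b N =
      ∑ᶠ k ∈ {k : ℕ →₀ ℕ | (k.sum fun j kj => kj * p ^ j) = N},
        ∏ j ∈ (k : ℕ →₀ ℕ).support,
          (γ ^ p ^ j / (p : K) ^ j) ^ (k j) / ((k j).factorial : K)) (n : ℕ) :
    n • v γ ≤ v (b n) := by
  have : Fact p.Prime := ⟨hp⟩
  have hbn : b n = γ ^ n * (coeff n (artinHasse p ℚ) : ℚ) := by
    rw [hb, ← coeff_rescale_artinHasse hp.one_lt, coeff_rescale,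
      ← map_artinHasse hp.one_lt (algebraMap ℚ K), coeff_map, eq_ratCast]
  rw [hbn, v.map_mul, v.map_pow]
  exact le_add_of_nonneg_right
    (addValuation_ratCast_nonneg v (hv _ (not_dvd_den_coeff_artinHasse n)))

/-- the coefficients `b j` of `θ∞(t) = AH(γ t)` (expanded via the
exponential series as in the Artin–Hasse product) satisfy
`ord (b j) ≥ j/(p-1)` for all `j ≥ 0`. -/
theorem theta_infty_coeff_bound (p : ℕ) (hp : p.Prime) {K : Type} [Field K] [CharZero K]
    (ord : K → WithTop ℝ)
    (hord_top : ∀ x : K, ord x = ⊤ ↔ x = 0)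
    (hord_mul : ∀ x y : K, ord (x * y) = ord x + ord y)
    (hord_add : ∀ x y : K, min (ord x) (ord y) ≤ ord (x + y))
    (hord_neg : ∀ x : K, ord (-x) = ord x)
    (hord_p : ord (p : K) = ((1 : ℝ) : WithTop ℝ))
    (hord_unit : ∀ m : ℕ, ¬ p ∣ m → m ≠ 0 → ord (m : K) = ((0 : ℝ) : WithTop ℝ))
    (γ : K)
    (hγ : ord γ = ((((p : ℝ) - 1)⁻¹ : ℝ) : WithTop ℝ))
    (hroot : ∀ M : ℝ, ∃ N : ℕ, ∀ m ≥ N,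
      (M : WithTop ℝ) ≤ ord (∑ j ∈ Finset.range (m + 1), γ ^ p ^ j / (p : K) ^ j))
    (b : ℕ → K)
    (hb : ∀ N : ℕ, b N =
      ∑ᶠ k ∈ {k : ℕ →₀ ℕ | (k.sum fun j kj => kj * p ^ j) = N},
        ∏ j ∈ (k : ℕ →₀ ℕ).support,
          (γ ^ p ^ j / (p : K) ^ j) ^ (k j) / ((k j).factorial : K))
 :
    ∀ j : ℕ, ((((j : ℝ) / ((p : ℝ) - 1)) : ℝ) : WithTop ℝ) ≤ ord (b j) := by
  have hone : ord 1 = 0 := by simpa using hord_unit 1 hp.not_dvd_one one_ne_zero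
  let v : AddValuation K (WithTop ℝ) := .of ord ((hord_top 0).2 rfl) hone hord_add hord_mul
  intro n
  have hv : n • ord γ ≤ ord (b n) := theta_infty_coeff_bound_general hp v
    (fun m hm => hord_unit m hm fun h => hm (h ▸ dvd_zero p)) γ b hb n
  rwa [hγ, ← WithTop.coe_nsmul, nsmul_eq_mul, ← div_eq_mul_inv] at hv
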